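/- arXiv:1812.04490 — 4 statements merged into one kernel-verified Lean document; each statement's English description precedes it below -/
import Mathlib

section
/- For every positive integer n and all nonnegative integers a_1, …, a_n, the constant term of F_n(x; a; 0) = ∏_{1≤i≠j≤n} (1 − x_i/x_j)^{a_j} equals the multinomial coefficient (a_1 + a_2 + ⋯ + a_n)! / (a_1! a_2! ⋯ a_n!). Equivalently, the coefficient of ∏_{j=1}^n x_j^{(n−1)a_j} in the polynomial ∏_{1≤i≠j≤n} (x_j − x_i)^{a_j} over ℤ equals (a_1 + ⋯ + a_n)! / (a_1! ⋯ a_n!). -/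
/-- The polynomial `∏_{1 ≤ i ≠ j ≤ n} (x_j - x_i)^{a_j}` over `ℤ`. -/
noncomputable def dysonPoly (n : ℕ) (a : Fin n → ℕ) : MvPolynomial (Fin n) ℤ :=
  ∏ j : Fin n, ∏ i ∈ Finset.univ.erase j, (MvPolynomial.X j - MvPolynomial.X i) ^ a j

/-- The constant term `c_n(a; b)` of the Laurent polynomial
`F_n(x; a; b) = ∏_h x_h^{-b_h} ∏_{1 ≤ i ≠ j ≤ n} (1 - x_i/x_j)^{a_j}`, i.e. the
coefficient of `∏_j x_j^{(n-1)a_j + b_j}` in `∏_{1 ≤ i ≠ j ≤ n} (x_j - x_i)^{a_j}`,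
taken to be `0` if some exponent `(n-1)a_j + b_j` is negative. -/
noncomputable def dysonCT (n : ℕ) (a : Fin n → ℕ) (b : Fin n → ℤ) : ℤ :=
  if ∀ j, 0 ≤ ((n : ℤ) - 1) * a j + b j then
    MvPolynomial.coeff
      (Finsupp.equivFunOnFinite.symm fun j => (((n : ℤ) - 1) * a j + b j).toNat)
      (dysonPoly n a)
  else 0

/-!
This is Good's argument. Interpolating `x ^ (n - 1)` at `n` distinct nodes `x_j` and comparing
leading coefficients gives `1 = ∑ j, ∏_{i ≠ j} (1 - x_i / x_j)⁻¹`. Multiplying by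
`∏_{i ≠ j} (1 - x_i / x_j) ^ a_j` shows that, when all `a_j` are positive, the constant term for `a`
is the sum over `j` of the constant terms for `a - e_j`, which is also Pascal's recurrence for
multinomial coefficients. When some `a_k = 0`, the polynomial form may be evaluated at
`x_k = 0` without changing the coefficient in question, which removes the index `k`.
-/

section DysonConjecture

open Finset MvPolynomial

variable {ι : Type*} [DecidableEq ι]

section Multinomial

variable {s : Finset ι} {j : ι}

theorem sub_pi_single_add_pi_single {a : ι → ℕ} (ha : a j ≠ 0) :
    a - Pi.single j 1 + Pi.single j 1 = a := by
  ext i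
  rcases eq_or_ne i j with rfl | hij
  · simp [Nat.sub_add_cancel (Nat.pos_of_ne_zero ha)]
  · simp [hij]

theorem sum_add_pi_single (hj : j ∈ s) (a : ι → ℕ) :
    ∑ i ∈ s, (a + Pi.single j 1 : ι → ℕ) i = ∑ i ∈ s, a i + 1 := by
  simp [sum_add_distrib, hj]

theorem prod_factorial_add_pi_single (hj : j ∈ s) (a : ι → ℕ) :
    ∏ i ∈ s, ((a + Pi.single j 1 : ι → ℕ) i).factorial = (a j + 1) * ∏ i ∈ s, (a i).factorial := by
  have h_erase : ∀ i ∈ s.erase j, ((a + Pi.single j 1 : ι → ℕ) i).factorial = (a i).factorial :=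
    fun i hi ↦ by simp [ne_of_mem_erase hi]
  rw [← mul_prod_erase s _ hj, ← mul_prod_erase s (fun i ↦ (a i).factorial) hj,
    prod_congr rfl h_erase, ← mul_assoc]
  simp [Nat.factorial_succ]

theorem succ_mul_multinomial_add_pi_single (hj : j ∈ s) (a : ι → ℕ) :
    (a j + 1) * Nat.multinomial s (a + Pi.single j 1) =
      (∑ i ∈ s, a i + 1) * Nat.multinomial s a := by
  have hpos : 0 < ∏ i ∈ s, (a i).factorial := prod_pos fun i _ ↦ (a i).factorial_pos
  refine Nat.eq_of_mul_eq_mul_left hpos ?_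
  calc (∏ i ∈ s, (a i).factorial) * ((a j + 1) * Nat.multinomial s (a + Pi.single j 1))
      = (∏ i ∈ s, ((a + Pi.single j 1 : ι → ℕ) i).factorial) *
          Nat.multinomial s (a + Pi.single j 1) := by
        rw [prod_factorial_add_pi_single hj]; ring
    _ = (∑ i ∈ s, a i + 1) * (∑ i ∈ s, a i).factorial := by
        rw [Nat.multinomial_spec, sum_add_pi_single hj, Nat.factorial_succ]
    _ = _ := by rw [← Nat.multinomial_spec]; ring

theorem multinomial_eq_sum_sub_pi_single {a : ι → ℕ} (ha : ∑ i ∈ s, a i ≠ 0) :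
    Nat.multinomial s a = ∑ j ∈ s with a j ≠ 0, Nat.multinomial s (a - Pi.single j 1) := by
  refine Nat.eq_of_mul_eq_mul_left (Nat.pos_of_ne_zero ha) ?_
  have h_term : ∀ j ∈ s, a j ≠ 0 → a j * Nat.multinomial s a =
      (∑ i ∈ s, a i) * Nat.multinomial s (a - Pi.single j 1) := by
    intro j hj haj
    have h_add := succ_mul_multinomial_add_pi_single hj (a - Pi.single j 1)
    rw [← sum_add_pi_single hj, sub_pi_single_add_pi_single haj] at h_add
    simpa [Nat.sub_add_cancel (Nat.pos_of_ne_zero haj)] using h_add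
  calc (∑ i ∈ s, a i) * Nat.multinomial s a
      = ∑ j ∈ s with a j ≠ 0, a j * Nat.multinomial s a := by
        rw [← sum_mul, sum_filter_ne_zero]
    _ = _ := by
        rw [mul_sum]
        exact sum_congr rfl fun j hj ↦ h_term j (mem_filter.1 hj).1 (mem_filter.1 hj).2

end Multinomial

theorem sum_pow_div_prod_sub_eq_one {F : Type*} [Field F] {s : Finset ι} {v : ι → F}
    (hs : s.Nonempty) (hv : Set.InjOn v s) :
    ∑ j ∈ s, v j ^ (#s - 1) / ∏ i ∈ s.erase j, (v j - v i) = 1 := by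
  have hdeg : (#s : WithBot ℕ) = (Polynomial.X ^ (#s - 1) : Polynomial F).degree + 1 := by
    rw [Polynomial.degree_X_pow]
    exact_mod_cast (Nat.sub_add_cancel hs.card_pos).symm
  simpa using (Lagrange.leadingCoeff_eq_sum hv hdeg).symm

/-- The Dyson product `∏_{i ≠ j} (v_j - v_i) ^ a_j` over `i, j ∈ s`. The nodes `v` are arbitrary so
that they can be specialized; the Dyson polynomial is the case `v = X`. -/
def dysonProd {A : Type*} [CommRing A] (s : Finset ι) (v : ι → A) (a : ι → ℕ) : A :=
  ∏ j ∈ s, ∏ i ∈ s.erase j, (v j - v i) ^ a j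

section DysonProd

variable {A B : Type*} [CommRing A] [CommRing B] {s : Finset ι}

theorem map_dysonProd {F : Type*} [FunLike F A B] [RingHomClass F A B] (f : F)
    (s : Finset ι) (v : ι → A) (a : ι → ℕ) :
    f (dysonProd s v a) = dysonProd s (f ∘ v) a := by
  simp [dysonProd]

theorem dysonProd_congr {v w : ι → A} {a b : ι → ℕ} (hv : ∀ i ∈ s, v i = w i)
    (hab : ∀ i ∈ s, a i = b i) : dysonProd s v a = dysonProd s w b :=
  prod_congr rfl fun j hj ↦ prod_congr rfl fun i hi ↦ by
    rw [hv j hj, hv i (mem_of_mem_erase hi), hab j hj]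

theorem dysonProd_add (s : Finset ι) (v : ι → A) (a b : ι → ℕ) :
    dysonProd s v (a + b) = dysonProd s v a * dysonProd s v b := by
  simp [dysonProd, pow_add, prod_mul_distrib]

theorem dysonProd_pi_single {j : ι} (hj : j ∈ s) (v : ι → A) :
    dysonProd s v (Pi.single j 1) = ∏ i ∈ s.erase j, (v j - v i) := by
  rw [dysonProd, prod_eq_single_of_mem j hj]
  · simp
  · intro l _ hl
    simp [hl]

theorem dysonProd_one_sub_pi_single_mul {j : ι} (hj : j ∈ s) (v : ι → A) :
    dysonProd s v (1 - Pi.single j 1) * ∏ i ∈ s.erase j, (v j - v i) = dysonProd s v 1 := by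
  rw [← dysonProd_pi_single hj, ← dysonProd_add, sub_pi_single_add_pi_single (by simp)]

theorem dysonProd_one_eq_sum_of_injOn {F : Type*} [Field F] {v : ι → F} (hs : s.Nonempty)
    (hv : Set.InjOn v s) :
    dysonProd s v 1 = ∑ j ∈ s, v j ^ (#s - 1) * dysonProd s v (1 - Pi.single j 1) := by
  rw [← mul_one (dysonProd s v 1), ← sum_pow_div_prod_sub_eq_one hs hv, mul_sum]
  refine sum_congr rfl fun j hj ↦ ?_
  have hne : ∏ i ∈ s.erase j, (v j - v i) ≠ 0 := prod_ne_zero_iff.2 fun i hi ↦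
    sub_ne_zero.2 fun h ↦ ne_of_mem_erase hi (hv hj (mem_of_mem_erase hi) h).symm
  rw [← dysonProd_one_sub_pi_single_mul hj]
  field_simp

-- Both sides are integer polynomials in the nodes, so it suffices to treat the generic nodes `X`,
-- which are distinct elements of a field of rational functions.
theorem dysonProd_one_eq_sum (hs : s.Nonempty) (v : ι → A) :
    dysonProd s v 1 = ∑ j ∈ s, v j ^ (#s - 1) * dysonProd s v (1 - Pi.single j 1) := by
  have h_generic : dysonProd s (X : ι → MvPolynomial ι ℤ) 1 =
      ∑ j ∈ s, X j ^ (#s - 1) * dysonProd s X (1 - Pi.single j 1) := by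
    let φ := algebraMap (MvPolynomial ι ℤ) (FractionRing (MvPolynomial ι ℤ))
    have hφ : Function.Injective φ := IsFractionRing.injective _ _
    apply hφ
    simpa [map_dysonProd] using
      dysonProd_one_eq_sum_of_injOn hs (hφ.comp X_injective).injOn
  have h_nodes : ⇑(aeval v : MvPolynomial ι ℤ →ₐ[ℤ] A) ∘ X = v := by
    ext
    simp
  simpa only [map_sum, map_mul, map_pow, map_dysonProd, aeval_X, h_nodes] using
    congrArg (aeval v : MvPolynomial ι ℤ →ₐ[ℤ] A) h_generic

theorem dysonProd_eq_sum (hs : s.Nonempty) (v : ι → A) {a : ι → ℕ} (ha : ∀ j ∈ s, a j ≠ 0) :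
    dysonProd s v a = ∑ j ∈ s, v j ^ (#s - 1) * dysonProd s v (a - Pi.single j 1) := by
  have h_split : ∀ b c : ι → ℕ, (∀ i ∈ s, b i = (c + (a - 1)) i) →
      dysonProd s v b = dysonProd s v c * dysonProd s v (a - 1) := fun b c h ↦ by
    rw [dysonProd_congr (fun _ _ ↦ rfl) h, dysonProd_add]
  have h_one : ∀ i ∈ s, a i = (1 + (a - 1)) i := fun i hi ↦
    (Nat.add_sub_of_le (Nat.pos_of_ne_zero (ha i hi))).symm
  rw [h_split a 1 h_one, dysonProd_one_eq_sum hs, sum_mul]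
  refine sum_congr rfl fun j hj ↦ ?_
  rw [mul_assoc, h_split (a - Pi.single j 1) (1 - Pi.single j 1)]
  intro i hi
  rcases eq_or_ne i j with rfl | hij
  · simp
  · simpa [hij] using h_one i hi

theorem dysonProd_insert {k : ι} (hk : k ∉ s) {v : ι → A} (hv : v k = 0) {a : ι → ℕ}
    (ha : a k = 0) :
    dysonProd (insert k s) v a = (∏ j ∈ s, v j ^ a j) * dysonProd s v a := by
  rw [dysonProd, prod_insert hk, dysonProd, ← prod_mul_distrib]
  simp only [ha, pow_zero, prod_const_one, one_mul]
  refine prod_congr rfl fun j hj ↦ ?_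
  have hkj : k ≠ j := (ne_of_mem_of_not_mem hj hk).symm
  rw [erase_insert_of_ne hkj, prod_insert fun h ↦ hk (mem_of_mem_erase h), hv, sub_zero]

end DysonProd

theorem coeff_aeval_update_zero {R : Type*} [CommSemiring R] {k : ι} {m : ι →₀ ℕ}
    (hm : m k = 0) (p : MvPolynomial ι R) :
    coeff m (aeval (Function.update X k 0 : ι → MvPolynomial ι R) p) = coeff m p := by
  induction p using MvPolynomial.induction_on' with
  | monomial u c =>
    by_cases hu : u k = 0
    · have h_prod : (u.prod fun i e ↦ (Function.update X k 0 : ι → MvPolynomial ι R) i ^ e) =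
          u.prod fun i e ↦ X i ^ e := Finsupp.prod_congr fun i hi ↦ by
        have hik : i ≠ k := fun h ↦ Finsupp.mem_support_iff.1 hi (h ▸ hu)
        rw [Function.update_of_ne hik]
      rw [aeval_monomial, h_prod, monomial_eq, algebraMap_eq]
    · have h_prod : (u.prod fun i e ↦ (Function.update X k 0 : ι → MvPolynomial ι R) i ^ e) = 0 :=
        prod_eq_zero (Finsupp.mem_support_iff.2 hu) (by simp [hu])
      have hne : u ≠ m := fun h ↦ hu (h ▸ hm)
      rw [aeval_monomial, h_prod, mul_zero, coeff_zero, coeff_monomial, if_neg hne]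
  | add p q hp hq => rw [map_add, coeff_add, hp, hq, coeff_add]

/-- The exponent vector of the monomial `∏_{j ∈ s} x_j ^ ((#s - 1) a_j)`, whose coefficient in the
Dyson polynomial is the constant term of `∏_{i ≠ j} (1 - x_i / x_j) ^ a_j`. -/
noncomputable def dysonExponent (s : Finset ι) (a : ι → ℕ) : ι →₀ ℕ :=
  Finsupp.indicator s fun j _ ↦ (#s - 1) * a j

section Coeff

variable {R : Type*} [CommRing R] {s : Finset ι}

theorem dysonExponent_add_pi_single {j : ι} (hj : j ∈ s) (a : ι → ℕ) :
    dysonExponent s (a + Pi.single j 1) = Finsupp.single j (#s - 1) + dysonExponent s a := by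
  ext i
  rcases eq_or_ne i j with rfl | hij
  · simp [dysonExponent, Finsupp.indicator_apply, hj, mul_add, add_comm]
  · simp [dysonExponent, Finsupp.indicator_apply, hij]

theorem dysonExponent_insert {k : ι} (hk : k ∉ s) {a : ι → ℕ} (ha : a k = 0) :
    dysonExponent (insert k s) a = (Finsupp.indicator s fun j _ ↦ a j) + dysonExponent s a := by
  ext i
  by_cases hi : i ∈ s
  · have h_card : #s * a i = a i + (#s - 1) * a i := by
      have h_pos : 1 ≤ #s := card_pos.2 ⟨i, hi⟩
      rw [← one_add_mul, Nat.add_sub_of_le h_pos]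
    simpa [dysonExponent, Finsupp.indicator_apply, hi, hk] using h_card
  · rcases eq_or_ne i k with rfl | hik
    · simp [dysonExponent, Finsupp.indicator_apply, hi, ha]
    · simp [dysonExponent, Finsupp.indicator_apply, hi, hik]

theorem coeff_dysonProd_insert {k : ι} (hk : k ∉ s) {a : ι → ℕ} (ha : a k = 0) :
    coeff (dysonExponent (insert k s) a) (dysonProd (insert k s) (X : ι → MvPolynomial ι R) a) =
      coeff (dysonExponent s a) (dysonProd s (X : ι → MvPolynomial ι R) a) := by
  let v : ι → MvPolynomial ι R := Function.update X k 0
  have hv : ∀ i ∈ s, v i = X i := fun i hi ↦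
    Function.update_of_ne (ne_of_mem_of_not_mem hi hk) _ _
  have h_exp : dysonExponent (insert k s) a k = 0 := by
    simp [dysonExponent, Finsupp.indicator_apply, ha]
  have h_subst : aeval v (dysonProd (insert k s) (X : ι → MvPolynomial ι R) a) =
      dysonProd (insert k s) v a := by
    have h_nodes : ⇑(aeval v : MvPolynomial ι R →ₐ[R] MvPolynomial ι R) ∘ X = v := by
      ext1
      simp
    rw [map_dysonProd, h_nodes]
  calc coeff (dysonExponent (insert k s) a) (dysonProd (insert k s) X a)
      = coeff (dysonExponent (insert k s) a) (dysonProd (insert k s) v a) := by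
        rw [← coeff_aeval_update_zero h_exp, h_subst]
    _ = coeff (dysonExponent (insert k s) a) ((∏ j ∈ s, X j ^ a j) * dysonProd s X a) := by
        rw [dysonProd_insert hk (Function.update_self ..) ha, dysonProd_congr hv fun _ _ ↦ rfl,
          prod_congr rfl fun j hj ↦ by rw [hv j hj]]
    _ = coeff (dysonExponent s a) (dysonProd s X a) := by
        rw [prod_X_pow, dysonExponent_insert hk ha, coeff_monomial_mul, one_mul]

theorem coeff_dysonProd_eq_sum (hs : s.Nonempty) {a : ι → ℕ} (ha : ∀ j ∈ s, a j ≠ 0) :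
    coeff (dysonExponent s a) (dysonProd s (X : ι → MvPolynomial ι R) a) =
      ∑ j ∈ s, coeff (dysonExponent s (a - Pi.single j 1))
        (dysonProd s (X : ι → MvPolynomial ι R) (a - Pi.single j 1)) := by
  rw [dysonProd_eq_sum hs X ha, coeff_sum]
  refine sum_congr rfl fun j hj ↦ ?_
  nth_rw 1 [← sub_pi_single_add_pi_single (ha j hj)]
  rw [dysonExponent_add_pi_single hj, X_pow_eq_monomial, coeff_monomial_mul, one_mul]

theorem dysonCT_zero_eq_coeff {n : ℕ} (hn : 0 < n) (a : Fin n → ℕ) :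
    dysonCT n a 0 = coeff (dysonExponent univ a) (dysonProd univ X a) := by
  have h_exp : ∀ j, ((n : ℤ) - 1) * a j + (0 : Fin n → ℤ) j = (((n - 1) * a j : ℕ) : ℤ) := by
    intro j
    push_cast [Nat.cast_sub hn]
    simp
  simp only [dysonCT, h_exp, Int.toNat_natCast, Nat.cast_nonneg, implies_true, if_true]
  congr 1
  ext j
  simp [dysonExponent]

theorem dyson_conjecture_general (R : Type*) [CommRing R] (s : Finset ι) (a : ι → ℕ) :
    coeff (dysonExponent s a) (dysonProd s (X : ι → MvPolynomial ι R) a) =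
      (Nat.multinomial s a : R) := by
  induction hN : #s + ∑ j ∈ s, a j using Nat.strong_induction_on generalizing s a with
  | _ N ih =>
  rcases s.eq_empty_or_nonempty with rfl | hs
  · simp [dysonExponent, dysonProd, coeff_one, Finsupp.ext_iff]
  by_cases h_pos : ∀ j ∈ s, a j ≠ 0
  · have h_sum : ∑ j ∈ s, a j ≠ 0 :=
      (sum_pos (fun j hj ↦ Nat.pos_of_ne_zero (h_pos j hj)) hs).ne'
    have h_lt : ∀ j ∈ s, #s + ∑ i ∈ s, (a - Pi.single j 1 : ι → ℕ) i < N := fun j hj ↦ by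
      have h_succ := sum_add_pi_single hj (a - Pi.single j 1)
      rw [sub_pi_single_add_pi_single (h_pos j hj)] at h_succ
      lia
    rw [coeff_dysonProd_eq_sum hs h_pos, multinomial_eq_sum_sub_pi_single h_sum,
      filter_true_of_mem h_pos, Nat.cast_sum]
    exact sum_congr rfl fun j hj ↦ ih _ (h_lt j hj) s _ rfl
  · push Not at h_pos
    obtain ⟨k, hk, hak⟩ := h_pos
    obtain ⟨t, hkt, rfl⟩ : ∃ t, k ∉ t ∧ insert k t = s :=
      ⟨s.erase k, notMem_erase k s, insert_erase hk⟩
    have h_lt : #t + ∑ j ∈ t, a j < N := by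
      rw [← hN, card_insert_of_notMem hkt, sum_insert hkt]
      lia
    rw [coeff_dysonProd_insert hkt hak, ih _ h_lt t a rfl, Nat.multinomial_insert hkt, hak]
    simp

end Coeff

end DysonConjecture

/-- Dyson's conjecture: the constant term of `F_n(x; a; 0)` is the multinomial
coefficient `(a_1 + ⋯ + a_n)! / (a_1! ⋯ a_n!)`. -/
theorem dyson_conjecture (n : ℕ) (hn : 0 < n) (a : Fin n → ℕ) :
    dysonCT n a 0 = (Nat.multinomial Finset.univ a : ℤ) := by
  rw [dysonCT_zero_eq_coeff hn, dyson_conjecture_general]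
end

section
/- For every positive integer n, integers b_1, …, b_n, and positive integers a_1, …, a_n, the Laurent polynomial identity F_n(x; a; b) = Σ_{i=1}^n F_n(x; ⟨a_1, …, a_{i−1}, a_i − 1, a_{i+1}, …, a_n⟩; b) holds in the ring of Laurent polynomials (equivalently, in the field of rational functions ℚ(x_1, …, x_n)). -/
/-- `F_n(x; a; b) = ∏_h x_h^{-b_h} ∏_{1 ≤ i ≠ j ≤ n} (1 - x_i/x_j)^{a_j}`,
as an element of a field `K` in which the variables `x` take values. -/
noncomputable def dysonF {n : ℕ} {K : Type*} [Field K] (x : Fin n → K)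
    (a : Fin n → ℕ) (b : Fin n → ℤ) : K :=
  (∏ h : Fin n, x h ^ (-(b h))) *
    ∏ j : Fin n, ∏ i ∈ Finset.univ.erase j, (1 - x i / x j) ^ a j

/-- The variables of the rational function field `ℚ(x_1, …, x_n)`. -/
noncomputable def xvar (n : ℕ) : Fin n → FractionRing (MvPolynomial (Fin n) ℚ) :=
  fun i => algebraMap (MvPolynomial (Fin n) ℚ) _ (MvPolynomial.X i)

/-! Write `P_j = ∏_{i ≠ j} (1 - x_i / x_j)`, so that the Dyson product is `∏_j P_j ^ a_j`.
Cancelling the common factor `∏_j P_j ^ (a_j - 1)` leaves the case where every exponent is `1`,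
that is, `∏_j P_j = ∑_k ∏_{j ≠ k} P_j`. If two of the `x_i` coincide, then two of the `P_j` vanish
and both sides are `0`. Otherwise the claim is `∑_k 1 / P_k = 1`; here `1 / P_k` is the value at `0`
of the `k`-th Lagrange basis polynomial for the nodes `1 / x_i`, and these polynomials sum to `1`.
-/

section DysonColumn

variable {ι K : Type*} [DecidableEq ι] [Field K] {s : Finset ι} {x : ι → K}

/-- The product of the factors `1 - x_i / x_j`, `i ∈ s \ {j}`, of the Dyson product that have `x_j`
in the denominator; they all carry the exponent `a_j` there. -/
def dysonColumn (s : Finset ι) (x : ι → K) (j : ι) : K :=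
  ∏ i ∈ s.erase j, (1 - x i / x j)

theorem dysonColumn_ne_zero {j : ι} (hj : j ∈ s) (hxj : x j ≠ 0) (hinj : Set.InjOn x s) :
    dysonColumn s x j ≠ 0 := by
  refine Finset.prod_ne_zero_iff.2 fun i hi => sub_ne_zero.2 fun h => ?_
  have hxij : x i = x j := (div_eq_one_iff_eq hxj).1 h.symm
  exact Finset.ne_of_mem_erase hi (hinj (Finset.mem_of_mem_erase hi) hj hxij)

theorem dysonColumn_eq_zero {i j : ι} (hi : i ∈ s) (hij : i ≠ j) (hxj : x j ≠ 0)
    (hxij : x i = x j) : dysonColumn s x j = 0 :=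
  Finset.prod_eq_zero (Finset.mem_erase.2 ⟨hij, hi⟩) (by rw [hxij, div_self hxj, sub_self])

theorem eval_zero_basisDivisor_inv {u : K} (hu : u ≠ 0) (v : K) :
    (Lagrange.basisDivisor v⁻¹ u⁻¹).eval 0 = (1 - u / v)⁻¹ := by
  have hfactor : v⁻¹ - u⁻¹ = -u⁻¹ * (1 - u / v) := by
    field_simp
    ring
  rw [Lagrange.basisDivisor, Polynomial.eval_mul, Polynomial.eval_C, Polynomial.eval_sub,
    Polynomial.eval_X, Polynomial.eval_C, zero_sub, hfactor, mul_inv_rev,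
    inv_mul_cancel_right₀ (neg_ne_zero.2 (inv_ne_zero hu))]

theorem eval_zero_basis_inv (hx : ∀ i ∈ s, x i ≠ 0) (j : ι) :
    (Lagrange.basis s (fun i => (x i)⁻¹) j).eval 0 = (dysonColumn s x j)⁻¹ := by
  rw [Lagrange.basis, Polynomial.eval_prod, dysonColumn, ← Finset.prod_inv_distrib]
  exact Finset.prod_congr rfl fun i hi =>
    eval_zero_basisDivisor_inv (hx i (Finset.mem_of_mem_erase hi)) (x j)

theorem sum_inv_dysonColumn (hs : s.Nonempty) (hx : ∀ i ∈ s, x i ≠ 0) (hinj : Set.InjOn x s) :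
    ∑ j ∈ s, (dysonColumn s x j)⁻¹ = 1 := by
  have hnodes : Set.InjOn (fun i => (x i)⁻¹) s := inv_injective.comp_injOn hinj
  calc ∑ j ∈ s, (dysonColumn s x j)⁻¹
      = (∑ j ∈ s, Lagrange.basis s (fun i => (x i)⁻¹) j).eval 0 := by
        simp only [Polynomial.eval_finsetSum, eval_zero_basis_inv hx]
    _ = 1 := by rw [Lagrange.sum_basis hnodes hs, Polynomial.eval_one]

theorem prod_dysonColumn_eq_sum_prod_erase (hs : s.Nonempty) (hx : ∀ i ∈ s, x i ≠ 0) :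
    ∏ j ∈ s, dysonColumn s x j = ∑ k ∈ s, ∏ j ∈ s.erase k, dysonColumn s x j := by
  by_cases hinj : Set.InjOn x s
  · have hcancel : ∀ k ∈ s, ∏ j ∈ s.erase k, dysonColumn s x j =
        (∏ j ∈ s, dysonColumn s x j) * (dysonColumn s x k)⁻¹ := fun k hk =>
      (eq_mul_inv_iff_mul_eq₀ (dysonColumn_ne_zero hk (hx k hk) hinj)).2
        (Finset.prod_erase_mul s _ hk)
    rw [Finset.sum_congr rfl hcancel, ← Finset.mul_sum, sum_inv_dysonColumn hs hx hinj, mul_one]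
  · obtain ⟨i, hi, j, hj, hxij, hij⟩ : ∃ i ∈ s, ∃ j ∈ s, x i = x j ∧ i ≠ j := by
      simpa [Set.InjOn] using hinj
    have hcol_i : dysonColumn s x i = 0 := dysonColumn_eq_zero hj hij.symm (hx i hi) hxij.symm
    have hcol_j : dysonColumn s x j = 0 := dysonColumn_eq_zero hi hij (hx j hj) hxij
    rw [Finset.prod_eq_zero hi hcol_i]
    refine (Finset.sum_eq_zero fun k _ => ?_).symm
    -- Removing the index `k` leaves at least one of the two vanishing columns.
    obtain rfl | hik := eq_or_ne i k
    · exact Finset.prod_eq_zero (Finset.mem_erase.2 ⟨hij.symm, hj⟩) hcol_j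
    · exact Finset.prod_eq_zero (Finset.mem_erase.2 ⟨hik, hi⟩) hcol_i

end DysonColumn

section DysonF

variable {n : ℕ} {K : Type*} [Field K]

theorem dysonF_eq_mul_prod_dysonColumn_pow (x : Fin n → K) (a : Fin n → ℕ) (b : Fin n → ℤ) :
    dysonF x a b = (∏ h, x h ^ (-b h)) * ∏ j, dysonColumn Finset.univ x j ^ a j := by
  simp only [dysonF, dysonColumn, Finset.prod_pow]

theorem dysonF_add (x : Fin n → K) (a c : Fin n → ℕ) (b : Fin n → ℤ) :
    dysonF x (a + c) b = dysonF x a b * ∏ j, dysonColumn Finset.univ x j ^ c j := by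
  simp only [dysonF_eq_mul_prod_dysonColumn_pow, Pi.add_apply, pow_add, Finset.prod_mul_distrib,
    mul_assoc]

theorem dysonF_add_one (x : Fin n → K) (a : Fin n → ℕ) (b : Fin n → ℤ) :
    dysonF x (a + 1) b = dysonF x a b * ∏ j, dysonColumn Finset.univ x j := by
  simp only [dysonF_add, Pi.one_apply, pow_one]

theorem dysonF_update_add_one (x : Fin n → K) (a : Fin n → ℕ) (b : Fin n → ℤ) (k : Fin n) :
    dysonF x (Function.update (a + 1) k (a k)) b =
      dysonF x a b * ∏ j ∈ Finset.univ.erase k, dysonColumn Finset.univ x j := by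
  have hexp : Function.update (a + 1) k (a k) = a + Function.update (1 : Fin n → ℕ) k 0 := by
    simpa using Function.update_add a 1 k (a k) 0
  rw [hexp, dysonF_add, ← Finset.mul_prod_erase _ _ (Finset.mem_univ k), Function.update_self,
    pow_zero, one_mul]
  congr 1
  refine Finset.prod_congr rfl fun j hj => ?_
  rw [Function.update_of_ne (Finset.ne_of_mem_erase hj), Pi.one_apply, pow_one]

theorem dysonF_recursion_general (hn : 0 < n) {x : Fin n → K} (hx : ∀ i, x i ≠ 0)
    (b : Fin n → ℤ) {a : Fin n → ℕ} (ha : ∀ i, 1 ≤ a i) :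
    dysonF x a b = ∑ i, dysonF x (Function.update a i (a i - 1)) b := by
  obtain ⟨c, rfl⟩ : ∃ c, a = c + 1 :=
    ⟨a - 1, funext fun i => (Nat.sub_add_cancel (ha i)).symm⟩
  have huniv : (Finset.univ : Finset (Fin n)).Nonempty := ⟨⟨0, hn⟩, Finset.mem_univ _⟩
  calc dysonF x (c + 1) b
      = dysonF x c b * ∑ k, ∏ j ∈ Finset.univ.erase k, dysonColumn Finset.univ x j := by
        rw [dysonF_add_one, prod_dysonColumn_eq_sum_prod_erase huniv fun i _ => hx i]
    _ = ∑ k, dysonF x (Function.update (c + 1) k ((c + 1) k - 1)) b := by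
        simp only [Finset.mul_sum, Pi.add_apply, Pi.one_apply, Nat.add_sub_cancel,
          dysonF_update_add_one]

end DysonF

theorem xvar_ne_zero {n : ℕ} (i : Fin n) : xvar n i ≠ 0 :=
  (map_ne_zero_iff _ (IsFractionRing.injective _ _)).2 (MvPolynomial.X_ne_zero i)

/-- Good's recursion: for `a_1, …, a_n ≥ 1`,
`F_n(x; a; b) = ∑_{i=1}^n F_n(x; ⟨a_1, …, a_i - 1, …, a_n⟩; b)`
in the field of rational functions `ℚ(x_1, …, x_n)`. -/
theorem dysonF_recursion (n : ℕ) (hn : 0 < n) (b : Fin n → ℤ) (a : Fin n → ℕ)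
    (ha : ∀ i, 1 ≤ a i) :
    dysonF (xvar n) a b
      = ∑ i : Fin n, dysonF (xvar n) (Function.update a i (a i - 1)) b :=
  dysonF_recursion_general hn xvar_ne_zero b ha
end

section
/- For all nonnegative integers a_1, a_2, a_3, the constant term c_3(⟨a_1, a_2, a_3⟩; ⟨2, −1, −1⟩) — that is, the coefficient of x_1^2 x_2^{−1} x_3^{−1} in ∏_{1≤i≠j≤3} (1 − x_i/x_j)^{a_j} — satisfies (1 + a_1 + a_2)(1 + a_1 + a_3)(1 + a_1) · a_1! a_2! a_3! · c_3(⟨a_1, a_2, a_3⟩; ⟨2, −1, −1⟩) = a_2 a_3 (2 + 2a_1 + a_2 + a_3) (a_1 + a_2 + a_3)!. -/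
/-!
Good's argument: interpolating `X ^ (n - 1)` at the nodes `x_1, …, x_n` and comparing leading
coefficients gives `1 = ∑_k x_k ^ (n - 1) / ∏_{i ≠ k} (x_k - x_i)`. Multiplied by
`∏_{i ≠ j} (x_j - x_i) ^ a_j`, this says that `c_n(a; b)`, for positive `a`, is the sum of the
`c_n(a'; b)` over the `n` vectors `a'` obtained by lowering one entry of `a` by one.
When an entry of `a` vanishes, its variable is never inverted in `∏_{i ≠ j} (1 - x_i / x_j) ^ a_j`,
and expanding in it expresses `c_n` through `c_{n-1}`.
For `n = 3` and `b = (2, -1, -1)` the closed form satisfies the same recurrence, and agrees with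
`c_3` when `a_1 = 0` (by reduction to the binomial coefficients `c_2`), and when `a_2 = 0` or
`a_3 = 0` (where both vanish).
-/

open MvPolynomial Finset

section LaurentCoeff

variable {σ R : Type*} [CommSemiring R]

open Classical in
/-- The coefficient of `∏_j x_j ^ (e j)` in a polynomial viewed as a Laurent polynomial: the
exponents are integers, and the coefficient is `0` as soon as one of them is negative. -/
noncomputable def laurentCoeff [Finite σ] (e : σ → ℤ) : MvPolynomial σ R →ₗ[R] R :=
  if 0 ≤ e then lcoeff R (Finsupp.equivFunOnFinite.symm fun j => (e j).toNat) else 0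

theorem laurentCoeff_natCast [Finite σ] (m : σ →₀ ℕ) (p : MvPolynomial σ R) :
    laurentCoeff (fun j => (m j : ℤ)) p = coeff m p := by
  have hm : (0 : σ → ℤ) ≤ fun j => (m j : ℤ) := fun j => Int.natCast_nonneg _
  rw [laurentCoeff, if_pos hm, lcoeff_apply]
  congr 1
  ext j
  simp

theorem laurentCoeff_of_neg [Finite σ] {e : σ → ℤ} {j : σ} (hj : e j < 0)
    (p : MvPolynomial σ R) : laurentCoeff e p = 0 := by
  rw [laurentCoeff, if_neg fun he => hj.not_ge (he j), LinearMap.zero_apply]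

theorem exists_natCast_or_exists_neg [Finite σ] (e : σ → ℤ) :
    (∃ m : σ →₀ ℕ, e = fun j => (m j : ℤ)) ∨ ∃ j, e j < 0 := by
  by_cases he : ∀ j, 0 ≤ e j
  · exact .inl ⟨Finsupp.equivFunOnFinite.symm fun j => (e j).toNat, funext fun j => by simp [he j]⟩
  · exact .inr (by simpa using he)

theorem laurentCoeff_monomial_mul [Finite σ] (e : σ → ℤ) (m : σ →₀ ℕ) (r : R)
    (p : MvPolynomial σ R) :
    laurentCoeff e (monomial m r * p) = r * laurentCoeff (fun j => e j - m j) p := by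
  obtain ⟨d, rfl⟩ | ⟨j, hj⟩ := exists_natCast_or_exists_neg e
  · rw [laurentCoeff_natCast, coeff_monomial_mul']
    split_ifs with hmd
    · rw [← laurentCoeff_natCast]
      congr 3 with j
      exact Nat.cast_sub (hmd j)
    · obtain ⟨j, hj⟩ : ∃ j, d j < m j := by simpa [Finsupp.le_def] using hmd
      rw [laurentCoeff_of_neg (j := j) (by lia), mul_zero]
  · rw [laurentCoeff_of_neg hj, laurentCoeff_of_neg (j := j) (by lia), mul_zero]

theorem laurentCoeff_cons {n : ℕ} (k : ℕ) (e : Fin n → ℤ) (p : MvPolynomial (Fin (n + 1)) R) :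
    laurentCoeff (Fin.cons (k : ℤ) e) p = laurentCoeff e ((finSuccEquiv R n p).coeff k) := by
  obtain ⟨m, rfl⟩ | ⟨j, hj⟩ := exists_natCast_or_exists_neg e
  · rw [laurentCoeff_natCast, finSuccEquiv_coeff_coeff, ← laurentCoeff_natCast]
    congr 2 with j
    cases j using Fin.cases <;> simp
  · rw [laurentCoeff_of_neg hj, laurentCoeff_of_neg (j := j.succ) (by simpa using hj)]

end LaurentCoeff

theorem dysonCT_eq_laurentCoeff (n : ℕ) (a : Fin n → ℕ) (b : Fin n → ℤ) :
    dysonCT n a b = laurentCoeff (fun j => ((n : ℤ) - 1) * a j + b j) (dysonPoly n a) := by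
  obtain ⟨m, hm⟩ | ⟨j, hj⟩ :=
    exists_natCast_or_exists_neg fun j => ((n : ℤ) - 1) * a j + b j
  · rw [hm, laurentCoeff_natCast, dysonCT, if_pos fun j => by simp [congrFun hm j]]
    congr 1
    ext j
    simp [congrFun hm j]
  · rw [dysonCT, if_neg fun h => hj.not_ge (h j)]
    exact (laurentCoeff_of_neg (j := j) hj _).symm

theorem dysonCT_of_neg {n : ℕ} {a : Fin n → ℕ} {b : Fin n → ℤ} {j : Fin n}
    (hj : ((n : ℤ) - 1) * a j + b j < 0) : dysonCT n a b = 0 := by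
  rw [dysonCT, if_neg fun h => hj.not_ge (h j)]

section Recurrence

theorem sum_pow_card_sub_one_div_prod_sub {K ι : Type*} [Field K] [DecidableEq ι] {s : Finset ι}
    {v : ι → K} (hv : Set.InjOn v s) (hs : s.Nonempty) :
    ∑ k ∈ s, v k ^ (#s - 1) / ∏ i ∈ s.erase k, (v k - v i) = 1 := by
  have hdeg : (Polynomial.X ^ (#s - 1) : Polynomial K).degree < #s := by
    rw [Polynomial.degree_X_pow]
    exact_mod_cast Nat.sub_one_lt hs.card_ne_zero
  simpa using (Lagrange.coeff_eq_sum hv hdeg).symm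

theorem dysonPoly_add (n : ℕ) (a b : Fin n → ℕ) :
    dysonPoly n (a + b) = dysonPoly n a * dysonPoly n b := by
  simp only [dysonPoly, Pi.add_apply, pow_add, prod_mul_distrib]

theorem dysonPoly_single_one {n : ℕ} (k : Fin n) :
    dysonPoly n (Pi.single k 1) = ∏ i ∈ univ.erase k, (X k - X i) := by
  rw [dysonPoly, prod_eq_single k (fun j _ hj => by simp [hj]) (by simp)]
  simp

theorem dysonPoly_sub_single_mul {n : ℕ} {a : Fin n → ℕ} {k : Fin n} (hk : a k ≠ 0) :
    dysonPoly n (a - Pi.single k 1) * ∏ i ∈ univ.erase k, (X k - X i) = dysonPoly n a := by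
  have hle : Pi.single k 1 ≤ a := by
    intro j
    obtain rfl | hj := eq_or_ne j k
    · simpa using Nat.one_le_iff_ne_zero.2 hk
    · simp [hj]
  rw [← dysonPoly_single_one, ← dysonPoly_add, tsub_add_cancel_of_le hle]

theorem dysonPoly_eq_sum {n : ℕ} [NeZero n] {a : Fin n → ℕ} (ha : ∀ k, a k ≠ 0) :
    dysonPoly n a = ∑ k, X k ^ (n - 1) * dysonPoly n (a - Pi.single k 1) := by
  let φ := algebraMap (MvPolynomial (Fin n) ℤ) (FractionRing (MvPolynomial (Fin n) ℤ))
  have hφ : Function.Injective φ := IsFractionRing.injective _ _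
  have hv : Function.Injective fun k => φ (X k) := hφ.comp X_injective
  have interpolation := sum_pow_card_sub_one_div_prod_sub hv.injOn (univ_nonempty (α := Fin n))
  apply hφ
  rw [← mul_one (φ _), ← interpolation, mul_sum, map_sum, card_fin]
  refine sum_congr rfl fun k _ => ?_
  have hprod : ∏ i ∈ univ.erase k, (φ (X k) - φ (X i)) ≠ 0 :=
    prod_ne_zero_iff.2 fun i hi => sub_ne_zero.2 fun h => (mem_erase.1 hi).1 (hv h.symm)
  rw [← dysonPoly_sub_single_mul (ha k), map_mul, map_mul, map_pow, map_prod]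
  simp only [map_sub]
  field_simp

theorem dysonCT_eq_sum {n : ℕ} [NeZero n] {a : Fin n → ℕ} (ha : ∀ k, a k ≠ 0) (b : Fin n → ℤ) :
    dysonCT n a b = ∑ k, dysonCT n (a - Pi.single k 1) b := by
  rw [dysonCT_eq_laurentCoeff, dysonPoly_eq_sum ha, map_sum]
  refine sum_congr rfl fun k _ => ?_
  rw [X_pow_eq_monomial, laurentCoeff_monomial_mul, one_mul, dysonCT_eq_laurentCoeff]
  congr 2 with j
  obtain rfl | hj := eq_or_ne j k
  · have hn : 1 ≤ n := NeZero.one_le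
    have haj : 1 ≤ a j := Nat.one_le_iff_ne_zero.2 (ha j)
    simp only [Finsupp.single_eq_same, Pi.sub_apply, Pi.single_eq_same, Nat.cast_sub hn,
      Nat.cast_sub haj]
    ring
  · simp [hj]

end Recurrence

section Boundary

theorem coeff_prod_univ {ι R : Type*} [Fintype ι] [DecidableEq ι] [CommSemiring R]
    (f : ι → Polynomial R) (k : ℕ) :
    (∏ j, f j).coeff k = ∑ i ∈ piAntidiag univ k, ∏ j, (f j).coeff (i j) := by
  rw [← Polynomial.coeff_coe, ← Polynomial.coeToPowerSeries.ringHom_apply, map_prod,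
    PowerSeries.coeff_prod]
  refine sum_equiv Finsupp.equivFunOnFinite (fun i => ?_) fun i _ => ?_
  · simp [mem_piAntidiag, mem_finsuppAntidiag]
  · simp

theorem coeff_C_sub_X_pow {R : Type*} [CommRing R] (r : R) (n k : ℕ) :
    ((Polynomial.C r - Polynomial.X) ^ n).coeff k = (-1) ^ k * n.choose k * r ^ (n - k) := by
  have hcomp : (Polynomial.C r - Polynomial.X) ^ n =
      ((Polynomial.X + Polynomial.C r) ^ n).comp (Polynomial.C (-1) * Polynomial.X) := by
    simp [sub_eq_neg_add]
  rw [hcomp, Polynomial.comp_C_mul_X_coeff, Polynomial.coeff_X_add_C_pow]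
  ring

theorem prod_erase_succ {M : Type*} [CommMonoid M] {n : ℕ} (j : Fin n) (f : Fin (n + 1) → M) :
    ∏ i ∈ univ.erase j.succ, f i = f 0 * ∏ i ∈ univ.erase j, f i.succ := by
  have herase : (univ.erase j.succ : Finset (Fin (n + 1))) =
      cons 0 ((univ.erase j).map (Fin.succEmb n)) (by simp) := by
    ext i
    cases i using Fin.cases <;> simp [(Fin.succ_ne_zero _).symm]
  rw [herase, prod_cons, prod_map]
  rfl

theorem finSuccEquiv_dysonPoly_cons_zero {n : ℕ} (a : Fin n → ℕ) :
    finSuccEquiv ℤ n (dysonPoly (n + 1) (Fin.cons 0 a)) =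
      (∏ j, (Polynomial.C (X j) - Polynomial.X) ^ a j) * Polynomial.C (dysonPoly n a) := by
  simp only [dysonPoly, Fin.prod_univ_succ, Fin.cons_zero, pow_zero, prod_const_one, one_mul,
    Fin.cons_succ, prod_erase_succ, prod_mul_distrib, map_mul, map_prod, map_pow, map_sub,
    finSuccEquiv_X_zero, finSuccEquiv_X_succ]

theorem dysonCT_cons_zero {n : ℕ} (k : ℕ) (a : Fin n → ℕ) (b : Fin n → ℤ) :
    dysonCT (n + 1) (Fin.cons 0 a) (Fin.cons (k : ℤ) b) =
      (-1) ^ k * ∑ i ∈ Finset.Nat.antidiagonalTuple n k,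
        (∏ j, ((a j).choose (i j) : ℤ)) * dysonCT n a (fun j => b j + i j) := by
  have exponents : (fun j => (((n + 1 : ℕ) : ℤ) - 1) * (Fin.cons 0 a : Fin (n + 1) → ℕ) j +
      (Fin.cons (k : ℤ) b : Fin (n + 1) → ℤ) j) = Fin.cons (k : ℤ) fun j => n * a j + b j := by
    ext j
    cases j using Fin.cases <;> simp
  rw [dysonCT_eq_laurentCoeff, exponents, laurentCoeff_cons, finSuccEquiv_dysonPoly_cons_zero,
    Polynomial.coeff_mul_C, coeff_prod_univ, piAntidiag_univ_fin_eq_antidiagonalTuple,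
    sum_mul, map_sum, mul_sum]
  refine sum_congr rfl fun i hi => ?_
  have monomial_form :
      ∏ j, ((Polynomial.C (X j : MvPolynomial (Fin n) ℤ) - Polynomial.X) ^ a j).coeff (i j) =
        monomial (Finsupp.equivFunOnFinite.symm (a - i))
          ((-1) ^ k * ∏ j, ((a j).choose (i j) : ℤ)) := by
    rw [monomial_eq, Finsupp.prod_fintype _ _ (by simp), ← Finset.Nat.mem_antidiagonalTuple.1 hi]
    simp [coeff_C_sub_X_pow, prod_mul_distrib, prod_pow_eq_pow_sum]
  rw [monomial_form, laurentCoeff_monomial_mul, mul_assoc]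
  congr 1
  by_cases hia : ∀ j, i j ≤ a j
  · rw [dysonCT_eq_laurentCoeff]
    congr 3 with j
    simp only [Finsupp.equivFunOnFinite_symm_apply_apply, Pi.sub_apply, Nat.cast_sub (hia j)]
    ring
  · obtain ⟨j, hj⟩ := not_forall.1 hia
    have hzero : ∏ j, ((a j).choose (i j) : ℤ) = 0 :=
      prod_eq_zero (mem_univ j) (by simp [Nat.choose_eq_zero_of_lt (not_le.1 hj)])
    rw [hzero, zero_mul, zero_mul]

theorem dysonCT_one (a : Fin 1 → ℕ) : dysonCT 1 a 0 = 1 := by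
  rw [dysonCT_eq_laurentCoeff]
  simpa [dysonPoly] using laurentCoeff_natCast 0 (1 : MvPolynomial (Fin 1) ℤ)

theorem dysonPoly_two (a b : ℕ) :
    dysonPoly 2 ![a, b] = C ((-1) ^ a) * dysonPoly 2 ![0, a + b] := by
  have hneg : (X 0 - X 1 : MvPolynomial (Fin 2) ℤ) ^ a = C ((-1) ^ a) * (X 1 - X 0) ^ a := by
    rw [← neg_sub, neg_pow, C_pow, C_neg, C_1]
  have erase_zero : univ.erase (0 : Fin 2) = {1} := by decide
  have erase_one : univ.erase (1 : Fin 2) = {0} := by decide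
  simp only [dysonPoly, Fin.prod_univ_two, erase_zero, erase_one, prod_singleton,
    Matrix.cons_val_zero, Matrix.cons_val_one, hneg, pow_zero, one_mul, pow_add, mul_assoc]

theorem dysonCT_two {a b i : ℕ} {e : Fin 2 → ℤ} (he₀ : a + e 0 = i) (he₁ : e 0 + e 1 = 0) :
    dysonCT 2 ![a, b] e = (-1) ^ (a + i) * (a + b).choose i := by
  have reduce : dysonCT 2 ![a, b] e =
      (-1) ^ a * dysonCT 2 (Fin.cons 0 ![a + b]) (Fin.cons (i : ℤ) ![-(i : ℤ)]) := by
    rw [dysonCT_eq_laurentCoeff, dysonCT_eq_laurentCoeff, dysonPoly_two, ← smul_eq_C_mul,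
      map_smul, smul_eq_mul]
    congr 3 with j
    fin_cases j
    · simp [he₀]
    · simp only [Fin.mk_one, Matrix.cons_val_one, Matrix.cons_val_fin_one, Fin.cons_one]
      lia
  have hone : dysonCT 1 ![a + b] (fun _ => 0) = 1 := dysonCT_one _
  rw [reduce, dysonCT_cons_zero]
  simp [hone, pow_add, mul_assoc]

end Boundary

section ThreeVariables

/-- The closed form of `c_3(⟨a, b, c⟩; ⟨2, -1, -1⟩)`, with rational values so that the
denominators can be divided out. -/
def dysonThreeClosedForm (a b c : ℕ) : ℚ :=
  b * c * (2 + 2 * a + b + c) * (a + b + c).factorial /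
    ((1 + a + b) * (1 + a + c) * (1 + a) * a.factorial * b.factorial * c.factorial)

theorem dysonThreeClosedForm_succ (a b c : ℕ) :
    dysonThreeClosedForm (a + 1) (b + 1) (c + 1) =
      dysonThreeClosedForm a (b + 1) (c + 1) + dysonThreeClosedForm (a + 1) b (c + 1) +
        dysonThreeClosedForm (a + 1) (b + 1) c := by
  have total : a + 1 + (b + 1) + (c + 1) = a + b + c + 2 + 1 := by ring
  have total_lower_a : a + (b + 1) + (c + 1) = a + b + c + 2 := by ring
  have total_lower_b : a + 1 + b + (c + 1) = a + b + c + 2 := by ring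
  have total_lower_c : a + 1 + (b + 1) + c = a + b + c + 2 := by ring
  simp only [dysonThreeClosedForm, total, total_lower_a, total_lower_b,
    total_lower_c, Nat.factorial_succ, Nat.cast_mul, Nat.cast_add, Nat.cast_one]
  field_simp
  ring

theorem dysonCT_three_succ (a b c : ℕ) (e : Fin 3 → ℤ) :
    dysonCT 3 ![a + 1, b + 1, c + 1] e =
      dysonCT 3 ![a, b + 1, c + 1] e + dysonCT 3 ![a + 1, b, c + 1] e +
        dysonCT 3 ![a + 1, b + 1, c] e := by
  rw [dysonCT_eq_sum (by simp [Fin.forall_fin_succ]), Fin.sum_univ_three]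
  congr 3 <;> ext j <;> fin_cases j <;> simp

theorem dysonCT_zero_succ_succ (b c : ℕ) :
    dysonCT 3 ![0, b + 1, c + 1] ![2, -1, -1] =
      (b + 1) * (c + 1) * (b + c + 2).choose (b + 1) -
        (b + 1).choose 2 * (b + c + 2).choose (b + 2) -
        (c + 1).choose 2 * (b + c + 2).choose b := by
  have total : b + 1 + (c + 1) = b + c + 2 := by ring
  have antidiagonal_two : Finset.Nat.antidiagonalTuple 2 2 = {![0, 2], ![1, 1], ![2, 0]} := by
    decide
  have expand := dysonCT_cons_zero 2 ![b + 1, c + 1] ![-1, -1]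
  rw [antidiagonal_two, sum_insert (by decide), sum_insert (by decide), sum_singleton,
    dysonCT_two (i := b) (by simp) (by simp), dysonCT_two (i := b + 1) (by simp) (by simp),
    dysonCT_two (i := b + 2) (by simp [add_assoc]) (by simp), total] at expand
  refine expand.trans ?_
  have sign₀ : (-1 : ℤ) ^ (b + 1 + b) = -1 := Odd.neg_one_pow ⟨b, by ring⟩
  have sign₁ : (-1 : ℤ) ^ (b + 1 + (b + 1)) = 1 := Even.neg_one_pow ⟨b + 1, rfl⟩
  have sign₂ : (-1 : ℤ) ^ (b + 1 + (b + 2)) = -1 := Odd.neg_one_pow ⟨b + 1, by ring⟩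
  simp only [sign₀, sign₁, sign₂, Fin.prod_univ_two, Matrix.cons_val_zero, Matrix.cons_val_one,
    Nat.choose_zero_right, Nat.choose_one_right]
  push_cast
  ring

theorem dysonCT_zero_eq_closedForm (b c : ℕ) :
    (dysonCT 3 ![0, b + 1, c + 1] ![2, -1, -1] : ℚ) = dysonThreeClosedForm 0 (b + 1) (c + 1) := by
  have total : b + 1 + (c + 1) = b + c + 2 := by ring
  have choose_central : ((b + c + 2).choose (b + 1) : ℚ) =
      (b + c + 2).factorial / ((b + 1).factorial * (c + 1).factorial) := by
    rw [← total, Nat.cast_add_choose]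
  have choose_upper : ((b + c + 2).choose (b + 2) : ℚ) =
      (b + c + 2).choose (b + 1) * (c + 1) / (b + 2) := by
    rw [eq_div_iff (by positivity)]
    have absorption := Nat.choose_succ_right_eq (b + c + 2) (b + 1)
    rw [show b + c + 2 - (b + 1) = c + 1 by lia] at absorption
    exact_mod_cast absorption
  have choose_lower : ((b + c + 2).choose b : ℚ) =
      (b + c + 2).choose (b + 1) * (b + 1) / (c + 2) := by
    rw [eq_div_iff (by positivity)]
    have absorption := Nat.choose_succ_right_eq (b + c + 2) b
    rw [show b + c + 2 - b = c + 2 by lia] at absorption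
    exact_mod_cast absorption.symm
  rw [dysonCT_zero_succ_succ]
  push_cast
  rw [choose_upper, choose_lower, choose_central, Nat.cast_choose_two, Nat.cast_choose_two,
    dysonThreeClosedForm, zero_add, total]
  push_cast
  field_simp
  ring

theorem dysonCT_three_eq_closedForm (a b c : ℕ) :
    (dysonCT 3 ![a, b, c] ![2, -1, -1] : ℚ) = dysonThreeClosedForm a b c := by
  have hb (a c : ℕ) : (dysonCT 3 ![a, 0, c] ![2, -1, -1] : ℚ) = dysonThreeClosedForm a 0 c := by
    rw [dysonCT_of_neg (j := 1) (by simp)]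
    simp [dysonThreeClosedForm]
  have hc (a b : ℕ) : (dysonCT 3 ![a, b, 0] ![2, -1, -1] : ℚ) = dysonThreeClosedForm a b 0 := by
    rw [dysonCT_of_neg (j := 2) (by simp)]
    simp [dysonThreeClosedForm]
  induction a generalizing b c with
  | zero =>
    obtain _ | b := b
    · exact hb 0 c
    obtain _ | c := c
    · exact hc 0 (b + 1)
    exact dysonCT_zero_eq_closedForm b c
  | succ a iha =>
    induction b generalizing c with
    | zero => exact hb (a + 1) c
    | succ b ihb =>
      induction c with
      | zero => exact hc (a + 1) (b + 1)
      | succ c ihc =>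
        rw [dysonCT_three_succ, dysonThreeClosedForm_succ, ← iha, ← ihb, ← ihc,
          Int.cast_add, Int.cast_add]

end ThreeVariables

/-- Closed form for `c_3(⟨a_1, a_2, a_3⟩; ⟨2, -1, -1⟩)`:
`(1+a_1+a_2)(1+a_1+a_3)(1+a_1) a_1! a_2! a_3! · c_3 = a_2 a_3 (2+2a_1+a_2+a_3) (a_1+a_2+a_3)!`. -/
theorem dysonCT_three_two_neg_one_neg_one (a₁ a₂ a₃ : ℕ) :
    (1 + (a₁ : ℤ) + a₂) * (1 + (a₁ : ℤ) + a₃) * (1 + (a₁ : ℤ)) *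
        (a₁.factorial : ℤ) * (a₂.factorial : ℤ) * (a₃.factorial : ℤ) *
        dysonCT 3 ![a₁, a₂, a₃] ![2, -1, -1]
      = (a₂ : ℤ) * (a₃ : ℤ) * (2 + 2 * (a₁ : ℤ) + a₂ + a₃) *
          ((a₁ + a₂ + a₃).factorial : ℤ) := by
  have value := dysonCT_three_eq_closedForm a₁ a₂ a₃
  rw [dysonThreeClosedForm, eq_div_iff (by positivity)] at value
  qify
  linear_combination value
end

section
/- For every integer n ≥ 2, every index k with 1 ≤ k ≤ n, nonnegative integers a_1, …, a_n, and integers b_1, …, b_n, the Laurent polynomial identity F_n(x; ⟨a_1, …, a_{k−1}, 0, a_{k+1}, …, a_n⟩; b) = F_{n−1}(x̂^{(k)}; â^{(k)}; 0) · [ x_k^{−b_k} ∏_{1≤i≤n, i≠k} (x_i − x_k)^{a_i} / x_i^{a_i + b_i} ] holds, where x̂^{(k)} = ⟨x_1, …, x_{k−1}, x_{k+1}, …, x_n⟩, â^{(k)} = ⟨a_1, …, a_{k−1}, a_{k+1}, …, a_n⟩, and 0 is the all-zero vector of length n − 1. -/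
section UnivErase

open Finset

variable {n : ℕ} {M : Type*} [CommMonoid M]

theorem prod_univ_erase_eq_prod_succAbove (k : Fin (n + 1)) (f : Fin (n + 1) → M) :
    ∏ i ∈ univ.erase k, f i = ∏ i, f (k.succAbove i) := by
  rw [Fin.univ_succAbove n k, erase_cons, prod_map]
  rfl

theorem prod_univ_erase_succAbove (k : Fin (n + 1)) (j : Fin n) (f : Fin (n + 1) → M) :
    ∏ i ∈ univ.erase (k.succAbove j), f i
      = f k * ∏ i ∈ univ.erase j, f (k.succAbove i) := by
  rw [Fin.univ_succAbove n k, erase_cons_of_ne _ (Fin.ne_succAbove k j), prod_cons,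
    ← Fin.succAboveEmb_apply, ← map_erase, prod_map]
  rfl

end UnivErase

section DysonProduct

open Finset

variable {n : ℕ} {K : Type*} [Field K]

theorem dysonF_eq_prod_zpow_mul (x : Fin n → K) (a : Fin n → ℕ) (b : Fin n → ℤ) :
    dysonF x a b = (∏ i, x i ^ (-b i)) * dysonF x a 0 := by
  simp [dysonF]

theorem dysonF_zero_eq_mul_prod_erase (x : Fin (n + 1) → K) (a : Fin (n + 1) → ℕ)
    (k : Fin (n + 1)) :
    dysonF x a 0 = dysonF (x ∘ k.succAbove) (a ∘ k.succAbove) 0 *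
      ∏ i ∈ univ.erase k, (1 - x i / x k) ^ a k * (1 - x k / x i) ^ a i := by
  -- Ordered pairs of distinct indices either avoid `k` or contain `k` in exactly one position.
  simp only [dysonF, Pi.zero_apply, neg_zero, zpow_zero, prod_const_one, one_mul,
    Function.comp_apply, Fin.prod_univ_succAbove _ k, prod_univ_erase_succAbove,
    prod_univ_erase_eq_prod_succAbove k, prod_mul_distrib]
  ring

theorem dysonF_update_zero_zero (x : Fin (n + 1) → K) (a : Fin (n + 1) → ℕ) (k : Fin (n + 1)) :
    dysonF x (Function.update a k 0) 0 = dysonF (x ∘ k.succAbove) (a ∘ k.succAbove) 0 *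
      ∏ i ∈ univ.erase k, (1 - x k / x i) ^ a i := by
  rw [dysonF_zero_eq_mul_prod_erase x _ k,
    Function.update_comp_eq_of_forall_ne a 0 (Fin.succAbove_ne k)]
  congr 1
  refine prod_congr rfl fun i hi ↦ ?_
  rw [Function.update_self, Function.update_of_ne (ne_of_mem_erase hi), pow_zero, one_mul]

theorem sub_pow_div_zpow_add {x : K} (hx : x ≠ 0) (y : K) (m : ℕ) (b : ℤ) :
    (x - y) ^ m / x ^ (m + b) = x ^ (-b) * (1 - y / x) ^ m := by
  rw [one_sub_div hx, div_pow, zpow_add₀ hx, zpow_natCast, zpow_neg, ← div_div, div_eq_inv_mul]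

theorem dysonF_update_zero_general (x : Fin (n + 1) → K) (hx : ∀ i, x i ≠ 0)
    (k : Fin (n + 1)) (a : Fin (n + 1) → ℕ) (b : Fin (n + 1) → ℤ) :
    dysonF x (Function.update a k 0) b
      = dysonF (x ∘ k.succAbove) (a ∘ k.succAbove) 0 *
          (x k ^ (-b k) *
            ∏ i ∈ univ.erase k, (x i - x k) ^ a i / x i ^ ((a i : ℤ) + b i)) := by
  calc dysonF x (Function.update a k 0) b
      = (x k ^ (-b k) * ∏ i ∈ univ.erase k, x i ^ (-b i)) *
          (dysonF (x ∘ k.succAbove) (a ∘ k.succAbove) 0 *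
            ∏ i ∈ univ.erase k, (1 - x k / x i) ^ a i) := by
        rw [dysonF_eq_prod_zpow_mul, dysonF_update_zero_zero,
          mul_prod_erase univ (fun i ↦ x i ^ (-b i)) (mem_univ k)]
    _ = dysonF (x ∘ k.succAbove) (a ∘ k.succAbove) 0 *
          (x k ^ (-b k) *
            ∏ i ∈ univ.erase k, x i ^ (-b i) * (1 - x k / x i) ^ a i) := by
        rw [prod_mul_distrib]
        ring
    _ = _ := by
        simp only [sub_pow_div_zpow_add (hx _)]

end DysonProduct

/-- For `n ≥ 2` and `1 ≤ k ≤ n`, setting `a_k = 0` factors the Dyson product: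
`F_n(x; ⟨a_1, …, 0, …, a_n⟩; b)
  = F_{n-1}(x̂⁽ᵏ⁾; â⁽ᵏ⁾; 0) · [x_k^{-b_k} ∏_{i ≠ k} (x_i - x_k)^{a_i} / x_i^{a_i + b_i}]`. -/
theorem dysonF_update_zero (n : ℕ) (hn : 1 ≤ n) (k : Fin (n + 1))
    (a : Fin (n + 1) → ℕ) (b : Fin (n + 1) → ℤ) :
    dysonF (xvar (n + 1)) (Function.update a k 0) b
      = dysonF (xvar (n + 1) ∘ k.succAbove) (a ∘ k.succAbove) 0 *
          (xvar (n + 1) k ^ (-(b k)) *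
            ∏ i ∈ Finset.univ.erase k,
              (xvar (n + 1) i - xvar (n + 1) k) ^ a i /
                xvar (n + 1) i ^ ((a i : ℤ) + b i)) :=
  dysonF_update_zero_general (xvar (n + 1)) xvar_ne_zero k a b
end
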